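/- (Example.) Fix t₀ ∈ (0,∞) and let k = (k_1,k_2,…) be a real sequence satisfying |k_n| < 1/((1+t₀)·arctan t₀) for every n ∈ ℕ. Then the infinite system x_n'(t) = (k_n/(1+t²))·x_n(t) + t·cos(x_{n+1}(t)), t ∈ [0,∞), with nonlocal initial conditions x_n(0) = (1/(n+t₀))·∫₀^{t₀} x_n(s) ds (n ∈ ℕ), has at least one solution, i.e. there exist differentiable functions x_n : [0,∞) → ℝ (n ∈ ℕ) satisfying all the equations and initial conditions. -/

import Mathlib

open Set MeasureTheory

noncomputable section

lemma aux_compact (C : ℝ) (L : ℝ → ℝ) :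
    IsCompact {f : C(ℝ, ℝ) | (∀ t, |f t| ≤ C * (1 + t ^ 2)) ∧
      ∀ R s t, |s| ≤ R → |t| ≤ R → |f s - f t| ≤ L R * |s - t|} := by
  apply ArzelaAscoli.isCompact_of_equicontinuous
  · have himg : (ContinuousMap.toFun '' {f : C(ℝ, ℝ) | (∀ t, |f t| ≤ C * (1 + t ^ 2)) ∧
        ∀ R s t, |s| ≤ R → |t| ≤ R → |f s - f t| ≤ L R * |s - t|}) =
        (Set.pi univ fun t : ℝ => Icc (-(C * (1 + t ^ 2))) (C * (1 + t ^ 2))) ∩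
        {f : ℝ → ℝ | ∀ R s t, |s| ≤ R → |t| ≤ R → |f s - f t| ≤ L R * |s - t|} := by
      ext f
      constructor
      · rintro ⟨g, ⟨h1, h2⟩, rfl⟩
        exact ⟨fun t _ => abs_le.1 (h1 t), h2⟩
      · rintro ⟨h1, h2⟩
        have hc : Continuous f := by
          rw [continuous_iff_continuousAt]
          intro t
          have hb : ∀ᶠ s in nhds t, |f s - f t| ≤ L (|t| + 1) * |s - t| := by
            filter_upwards [Metric.ball_mem_nhds t one_pos] with s hs
            apply h2
            · rw [Metric.mem_ball, Real.dist_eq] at hs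
              have := abs_sub_abs_le_abs_sub s t
              linarith
            · linarith
          rw [ContinuousAt, tendsto_iff_norm_sub_tendsto_zero]
          refine squeeze_zero' (Filter.Eventually.of_forall fun _ => norm_nonneg _) hb ?_
          have : Continuous fun s => L (|t| + 1) * |s - t| := by fun_prop
          simpa using this.tendsto t
        exact ⟨⟨f, hc⟩, ⟨fun t => abs_le.2 (h1 t (mem_univ _)), h2⟩, rfl⟩
    rw [himg]
    apply (isCompact_univ_pi fun t => isCompact_Icc).inter_right
    simp only [Set.ofPred_forall]
    refine isClosed_iInter fun R => isClosed_iInter fun s => isClosed_iInter fun t =>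
      isClosed_iInter fun _ => isClosed_iInter fun _ => ?_
    exact isClosed_le (by fun_prop) (by fun_prop)
  · intro t
    rw [Metric.equicontinuousAt_iff_right]
    intro ε hε
    have h1 : ∀ᶠ s in nhds t, L (|t| + 1) * |s - t| < ε := by
      have : Continuous fun s => L (|t| + 1) * |s - t| := by fun_prop
      have h := this.tendsto t
      simp only [sub_self, abs_zero, mul_zero] at h
      exact h.eventually (gt_mem_nhds hε)
    filter_upwards [h1, Metric.ball_mem_nhds t one_pos] with s hs1 hs ⟨f, hf⟩
    rw [dist_comm, Real.dist_eq]
    refine lt_of_le_of_lt (hf.2 (|t| + 1) s t ?_ ?_) hs1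
    · rw [Metric.mem_ball, Real.dist_eq] at hs
      have := abs_sub_abs_le_abs_sub s t
      linarith
    · linarith

lemma aux_limit (T : ℕ → C(ℝ, ℝ) → C(ℝ, ℝ)) (S : ℕ → Set C(ℝ, ℝ))
    (hS : ∀ n, IsCompact (S n)) (hT : ∀ n y, T n y ∈ S n)
    (hc : ∀ n (y : ℕ → C(ℝ, ℝ)) (z : C(ℝ, ℝ)),
      (∀ t, Filter.Tendsto (fun j => y j t) Filter.atTop (nhds (z t))) →
      ∀ t, Filter.Tendsto (fun j => T n (y j) t) Filter.atTop (nhds (T n z t))) :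
    ∃ x : ℕ → C(ℝ, ℝ), ∀ n, x n = T n (x (n + 1)) := by
  let g : ℕ → ℕ → C(ℝ, ℝ) := fun j => Nat.rec (fun n => T n 0)
    (fun _ h n => T n (h (n + 1))) j
  have g1 : ∀ j n, g (j + 1) n = T n (g j (n + 1)) := fun j n => rfl
  have gS : ∀ j n, g j n ∈ S n := by
    intro j n
    cases j with
    | zero => exact hT _ _
    | succ j => rw [g1]; exact hT _ _
  let u : ℕ → ℕ → C(ℝ, ℝ) := fun N n => g (N - n) n
  have hu : ∀ N, u N ∈ Set.pi univ S := fun N n _ => gS _ _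
  obtain ⟨x, -, φ, hφ, hx⟩ := (isCompact_univ_pi hS).tendsto_subseq hu
  refine ⟨x, fun n => ?_⟩
  have hp : ∀ n t, Filter.Tendsto (fun j => u (φ j) n t) Filter.atTop (nhds (x n t)) := by
    intro n t
    have h1 := (tendsto_pi_nhds.1 hx) n
    exact ((continuous_eval_const (F := C(ℝ, ℝ)) t).tendsto (x n)).comp h1
  ext t
  refine tendsto_nhds_unique (hp n t) ?_
  refine (hc n (fun j => u (φ j) (n + 1)) (x (n + 1)) (hp (n + 1)) t).congr' ?_
  filter_upwards [Filter.eventually_gt_atTop n] with j hj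
  have h2 : n < φ j := lt_of_lt_of_le hj (hφ.id_le j)
  have : φ j - n = (φ j - (n + 1)) + 1 := by omega
  simp only [u]
  rw [this, g1]

lemma aux_int (t₀ : ℝ) (ht₀ : 0 < t₀) (k : ℝ)
    (hk : |k| < 1 / ((1 + t₀) * Real.arctan t₀)) :
    ∫ s in (0:ℝ)..t₀, Real.exp (k * Real.arctan s) < 1 + t₀ := by
  have ha : 0 < Real.arctan t₀ := Real.arctan_pos.2 ht₀
  have hb : ∀ s ∈ Icc 0 t₀, Real.exp (k * Real.arctan s) ≤ Real.exp (1 / (1 + t₀)) := by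
    intro s hs
    apply Real.exp_le_exp.2
    have h1 : Real.arctan s ≤ Real.arctan t₀ := Real.arctan_strictMono.monotone hs.2
    have h0 : 0 ≤ Real.arctan s := Real.arctan_nonneg.2 hs.1
    calc k * Real.arctan s ≤ |k| * Real.arctan t₀ :=
          mul_le_mul (le_abs_self k) h1 h0 (abs_nonneg k)
      _ ≤ 1 / ((1 + t₀) * Real.arctan t₀) * Real.arctan t₀ := by gcongr
      _ = 1 / (1 + t₀) := by field_simp
  have h1 : ∫ s in (0:ℝ)..t₀, Real.exp (k * Real.arctan s) ≤
      ∫ s in (0:ℝ)..t₀, Real.exp (1 / (1 + t₀)) := by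
    apply intervalIntegral.integral_mono_on ht₀.le _ _ hb
    · apply Continuous.intervalIntegrable
      have := Real.continuous_arctan
      fun_prop
    · exact intervalIntegrable_const
  rw [intervalIntegral.integral_const, smul_eq_mul, sub_zero] at h1
  refine lt_of_le_of_lt h1 ?_
  have h2 : -(1 / (1 + t₀)) + 1 < Real.exp (-(1 / (1 + t₀))) :=
    Real.add_one_lt_exp (by simp; positivity)
  have h3 : -(1 / (1 + t₀)) + 1 = t₀ / (1 + t₀) := by field_simp; ring
  rw [h3, Real.exp_neg, div_lt_iff₀ (by positivity)] at h2
  have h4 := Real.exp_pos (1 / (1 + t₀))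
  calc t₀ * Real.exp (1 / (1 + t₀)) <
        ((Real.exp (1 / (1 + t₀)))⁻¹ * (1 + t₀)) * Real.exp (1 / (1 + t₀)) := by gcongr
    _ = 1 + t₀ := by field_simp

lemma aux_T (t₀ : ℝ) (ht₀ : 0 < t₀) (k a : ℝ)
    (ha : ∫ s in (0:ℝ)..t₀, Real.exp (k * Real.arctan s) < a) :
    ∃ (T : C(ℝ, ℝ) → C(ℝ, ℝ)) (C : ℝ),
      (∀ y t, HasDerivAt (T y) (k / (1 + t ^ 2) * T y t + t * Real.cos (y t)) t) ∧
      (∀ y, T y 0 = (1 / a) * ∫ s in (0:ℝ)..t₀, T y s) ∧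
      (∀ y t, |T y t| ≤ C * (1 + t ^ 2)) ∧
      (∀ (y : ℕ → C(ℝ, ℝ)) (z : C(ℝ, ℝ)),
        (∀ t, Filter.Tendsto (fun j => y j t) Filter.atTop (nhds (z t))) →
        ∀ t, Filter.Tendsto (fun j => T (y j) t) Filter.atTop (nhds (T z t))) := by
  have hat := Real.continuous_arctan
  let E : ℝ → ℝ := fun s => Real.exp (k * Real.arctan s)
  let q : C(ℝ, ℝ) → ℝ → ℝ := fun y s => s * Real.cos (y s) * Real.exp (-(k * Real.arctan s))
  let G : C(ℝ, ℝ) → ℝ → ℝ := fun y t => ∫ s in (0:ℝ)..t, q y s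
  let I := ∫ s in (0:ℝ)..t₀, E s
  let c : C(ℝ, ℝ) → ℝ := fun y => (∫ s in (0:ℝ)..t₀, E s * G y s) / (a - I)
  let M := Real.exp (|k| * (Real.pi / 2))
  have hI : I < a := ha
  have hI0 : 0 ≤ I := intervalIntegral.integral_nonneg ht₀.le fun s _ => (Real.exp_pos _).le
  have hM : 0 < M := Real.exp_pos _
  have hEc : Continuous E := by fun_prop
  have hqc : ∀ y, Continuous (q y) := fun y => by fun_prop
  have hkM : ∀ s, |k * Real.arctan s| ≤ |k| * (Real.pi / 2) := by
    intro s
    rw [abs_mul]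
    gcongr
    exact abs_le.2 ⟨(Real.neg_pi_div_two_lt_arctan s).le, (Real.arctan_lt_pi_div_two s).le⟩
  have hEM : ∀ s, |E s| ≤ M := fun s => by
    rw [abs_of_pos (Real.exp_pos _)]
    exact Real.exp_le_exp.2 (abs_le.1 (hkM s)).2
  have hqM : ∀ y s, |q y s| ≤ |s| * M := fun y s => by
    simp only [q]
    rw [abs_mul, abs_mul, abs_of_pos (Real.exp_pos _)]
    have h1 := Real.abs_cos_le_one (y s)
    have h2 : Real.exp (-(k * Real.arctan s)) ≤ M :=
      Real.exp_le_exp.2 (by linarith [(abs_le.1 (hkM s)).1])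
    calc |s| * |Real.cos (y s)| * Real.exp (-(k * Real.arctan s)) ≤ |s| * 1 * M := by gcongr
      _ = |s| * M := by ring
  have hGd : ∀ y t, HasDerivAt (G y) (q y t) t := fun y t =>
    intervalIntegral.integral_hasDerivAt_right ((hqc y).intervalIntegrable _ _)
      ((hqc y).stronglyMeasurableAtFilter _ _) (hqc y).continuousAt
  have hGc : ∀ y, Continuous (G y) := fun y =>
    continuous_iff_continuousAt.2 fun t => (hGd y t).continuousAt
  have hGM : ∀ y t, |G y t| ≤ t ^ 2 * M := by
    intro y t
    have := intervalIntegral.norm_integral_le_of_norm_le_const (a := 0) (b := t) (f := q y)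
      (C := |t| * M) (fun s hs => by
        refine (hqM y s).trans ?_
        have : |s| ≤ |t| := by
          have := abs_sub_left_of_mem_uIcc (uIoc_subset_uIcc hs)
          simpa using this
        gcongr)
    rw [Real.norm_eq_abs, sub_zero] at this
    calc |G y t| ≤ |t| * M * |t| := this
      _ = |t| ^ 2 * M := by ring
      _ = t ^ 2 * M := by rw [sq_abs]
  have hcM : ∀ y, |c y| ≤ (M * (t₀ ^ 2 * M) * t₀) / (a - I) := by
    intro y
    simp only [c]
    rw [abs_div, abs_of_pos (sub_pos.2 hI)]
    have := intervalIntegral.norm_integral_le_of_norm_le_const (a := 0) (b := t₀)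
      (f := fun s => E s * G y s)
      (C := M * (t₀ ^ 2 * M)) (fun s hs => by
        rw [uIoc_of_le ht₀.le] at hs
        rw [Real.norm_eq_abs, abs_mul]
        have h1 := hEM s
        have h2 : |G y s| ≤ t₀ ^ 2 * M := (hGM y s).trans (by
          have := hs.1.le
          have := hs.2
          gcongr)
        gcongr)
    rw [Real.norm_eq_abs, sub_zero, abs_of_pos ht₀] at this
    have := sub_pos.2 hI
    gcongr
  let C0 := (M * (t₀ ^ 2 * M) * t₀) / (a - I)
  have hC0 : 0 ≤ C0 := (abs_nonneg _).trans (hcM 0)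
  have hTc : ∀ y, Continuous fun t => E t * (c y + G y t) := fun y => by
    have := hGc y
    fun_prop
  refine ⟨fun y => ⟨fun t => E t * (c y + G y t), hTc y⟩, M * (C0 + M), ?_, ?_, ?_, ?_⟩
  · intro y t
    have h1 : HasDerivAt E (E t * (k * (1 / (1 + t ^ 2)))) t :=
      ((Real.hasDerivAt_arctan t).const_mul k).exp
    have h2 := h1.mul ((hGd y t).const_add (c y))
    refine h2.congr_deriv ?_
    have h3 : E t * q y t = t * Real.cos (y t) := by
      simp only [E, q]
      rw [Real.exp_neg]
      field_simp
    simp only [ContinuousMap.coe_mk]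
    rw [h3]
    ring
  · intro y
    simp only [ContinuousMap.coe_mk]
    have e0 : E 0 = 1 := by simp [E]
    have g0 : G y 0 = 0 := by simp [G]
    have h1 : ∫ s in (0:ℝ)..t₀, E s * (c y + G y s) =
        I * c y + ∫ s in (0:ℝ)..t₀, E s * G y s := by
      simp only [mul_add]
      rw [intervalIntegral.integral_add, intervalIntegral.integral_mul_const]
      · exact (hEc.mul continuous_const).intervalIntegrable _ _
      · exact (hEc.mul (hGc y)).intervalIntegrable _ _
    have h2 : ∫ s in (0:ℝ)..t₀, E s * G y s = c y * (a - I) := by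
      simp only [c]
      rw [div_mul_cancel₀ _ (sub_pos.2 hI).ne']
    have ha0 : a ≠ 0 := (lt_of_le_of_lt hI0 hI).ne'
    rw [h1, h2, e0, g0]
    field_simp
    ring
  · intro y t
    simp only [ContinuousMap.coe_mk]
    rw [abs_mul]
    have h1 := hEM t
    have h2 : |c y + G y t| ≤ C0 + t ^ 2 * M :=
      (abs_add_le _ _).trans (add_le_add (hcM y) (hGM y t))
    calc |E t| * |c y + G y t| ≤ M * (C0 + t ^ 2 * M) := by gcongr
      _ ≤ M * ((C0 + M) * (1 + t ^ 2)) := by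
        gcongr
        nlinarith [mul_nonneg hC0 (sq_nonneg t)]
      _ = M * (C0 + M) * (1 + t ^ 2) := by ring
  · intro y z hyz t
    simp only [ContinuousMap.coe_mk]
    have hG : ∀ t, Filter.Tendsto (fun j => G (y j) t) Filter.atTop (nhds (G z t)) := by
      intro t
      apply intervalIntegral.tendsto_integral_filter_of_dominated_convergence
        (fun s => |s| * M)
      · exact Filter.Eventually.of_forall fun j => (hqc _).aestronglyMeasurable
      · exact Filter.Eventually.of_forall fun j => Filter.Eventually.of_forall
          fun s _ => hqM _ s
      · exact (continuous_abs.mul continuous_const).intervalIntegrable _ _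
      · refine Filter.Eventually.of_forall fun s _ => ?_
        exact (((Real.continuous_cos.tendsto _).comp (hyz s)).const_mul s).mul_const _
    have hc : Filter.Tendsto (fun j => c (y j)) Filter.atTop (nhds (c z)) := by
      apply Filter.Tendsto.div_const
      apply intervalIntegral.tendsto_integral_filter_of_dominated_convergence
        (fun s => M * (s ^ 2 * M))
      · exact Filter.Eventually.of_forall fun j => (hEc.mul (hGc _)).aestronglyMeasurable
      · refine Filter.Eventually.of_forall fun j => Filter.Eventually.of_forall
          fun s _ => ?_
        rw [Real.norm_eq_abs, abs_mul]
        have h1 := hEM s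
        have h2 := hGM (y j) s
        gcongr
      · apply Continuous.intervalIntegrable
        fun_prop
      · exact Filter.Eventually.of_forall fun s _ => (hG s).const_mul _
    exact (hc.add (hG t)).const_mul _

/-- Example 3.4: the infinite system
`xₙ'(t) = (kₙ/(1+t²)) xₙ(t) + t cos(x_{n+1}(t))`, `t ∈ [0,∞)`, with nonlocal initial
conditions `xₙ(0) = (1/(n+t₀)) ∫₀^{t₀} xₙ(s) ds`, has at least one solution provided
`|kₙ| < 1/((1+t₀) arctan t₀)` for every `n`. (Components are indexed from `0` in Lean,
so the paper's `n ∈ {1,2,…}` corresponds to `n+1` here.) -/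
theorem statement_15
    (t₀ : ℝ) (ht₀ : 0 < t₀)
    (k : ℕ → ℝ)
    (hk : ∀ n : ℕ, |k n| < 1 / ((1 + t₀) * Real.arctan t₀)) :
    ∃ x : ℕ → ℝ → ℝ, ∀ n : ℕ,
      (∀ t : ℝ, 0 ≤ t →
        HasDerivWithinAt (x n)
          (k n / (1 + t ^ 2) * x n t + t * Real.cos (x (n + 1) t)) (Set.Ici (0:ℝ)) t) ∧
      x n 0 = (1 / ((n : ℝ) + 1 + t₀)) * ∫ s in (0:ℝ)..t₀, x n s := by
  have hT := fun n : ℕ => aux_T t₀ ht₀ (k n) ((n : ℝ) + 1 + t₀) (by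
    have := aux_int t₀ ht₀ (k n) (hk n)
    have h0 : (0:ℝ) ≤ n := Nat.cast_nonneg n
    linarith)
  choose T C h1 h2 h3 h4 using hT
  obtain ⟨x, hx⟩ := aux_limit T _
    (fun n => aux_compact (C n) (fun R => |k n| * (|C n| * (1 + R ^ 2)) + R)) (by
      intro n y
      refine ⟨h3 n y, fun R s t hs ht => ?_⟩
      have := Convex.norm_image_sub_le_of_norm_hasDerivWithin_le (s := Icc (-R) R)
        (f := T n y) (C := |k n| * (|C n| * (1 + R ^ 2)) + R)
        (fun r _ => (h1 n y r).hasDerivWithinAt) (fun r hr => by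
          have hr' : |r| ≤ R := abs_le.2 hr
          have hb : |T n y r| ≤ |C n| * (1 + R ^ 2) := by
            refine (h3 n y r).trans ?_
            have h5 : r ^ 2 ≤ R ^ 2 := sq_le_sq' hr.1 hr.2
            gcongr
            exact le_abs_self _
          have hk1 : |k n / (1 + r ^ 2)| ≤ |k n| := by
            rw [abs_div, abs_of_pos (by positivity : (0:ℝ) < 1 + r ^ 2)]
            exact div_le_self (abs_nonneg _) (by nlinarith [sq_nonneg r])
          refine (norm_add_le _ _).trans ?_
          rw [Real.norm_eq_abs, Real.norm_eq_abs, abs_mul, abs_mul]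
          have h6 : |r| * |Real.cos (y r)| ≤ R * 1 :=
            mul_le_mul hr' (Real.abs_cos_le_one _) (abs_nonneg _) ((abs_nonneg _).trans hr')
          rw [mul_one] at h6
          gcongr) (convex_Icc _ _) (abs_le.1 ht) (abs_le.1 hs)
      simpa only [Real.norm_eq_abs] using this) h4
  refine ⟨fun n => x n, fun n => ⟨fun t _ => ?_, ?_⟩⟩
  · have := (h1 n (x (n + 1)) t).hasDerivWithinAt (s := Set.Ici (0:ℝ))
    rw [← hx n] at this
    exact this
  · have := h2 n (x (n + 1))
    rw [← hx n] at this
    exact this
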